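/- Let p ≥ 7 be an odd integer and let u satisfy the self-similar profile equation (1−ρ²)u''(ρ) + (2/ρ − (2+2α)ρ)u'(ρ) − α(α+1)u(ρ) + u(ρ)^p = 0 for all ρ ∈ (0,1), and set w(ρ) = u(ρ)/(b∞ ρ^{−α}) − 1. Suppose there exists ρ₁ ∈ (0,1) with w(ρ₁) = 0 and 0 ≤ ρ₁ · w'(ρ₁) ≤ α. Then w(ρ) > −2α for all ρ ∈ (ρ₁, 1). -/

import Mathlib

open Set Real Filter

/-- The exponent `α = 2/(p-1)`. -/
noncomputable def alphaP (p : ℕ) : ℝ := 2 / ((p : ℝ) - 1)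

/-- `b₀ = (2(p+1)/(p-1)²)^(1/(p-1))`, the constant solution. -/
noncomputable def bZero (p : ℕ) : ℝ :=
  (2 * ((p : ℝ) + 1) / ((p : ℝ) - 1) ^ 2) ^ ((1 : ℝ) / ((p : ℝ) - 1))

/-- `b∞ = (2(p-3)/(p-1)²)^(1/(p-1))`. -/
noncomputable def bInfty (p : ℕ) : ℝ :=
  (2 * ((p : ℝ) - 3) / ((p : ℝ) - 1) ^ 2) ^ ((1 : ℝ) / ((p : ℝ) - 1))

/-- The singular static solution `u∞(ρ) = b∞ ρ^(-α)`. -/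
noncomputable def uInfty (p : ℕ) (ρ : ℝ) : ℝ := bInfty p * ρ ^ (-(alphaP p))

/-- The self-similar profile equation
`(1-ρ²)u'' + (2/ρ - (2+2α)ρ)u' - α(α+1)u + u^p = 0` at the point `ρ`. -/
def ProfileEq (p : ℕ) (u : ℝ → ℝ) (ρ : ℝ) : Prop :=
  (1 - ρ ^ 2) * deriv (deriv u) ρ + (2 / ρ - (2 + 2 * alphaP p) * ρ) * deriv u ρ
    - alphaP p * (alphaP p + 1) * u ρ + u ρ ^ p = 0

/-!
In the variable `log ρ` the ratio `v = u / u∞ = w + 1`, with slope `q = ρ v'`, moves in the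
potential `α (1 - α) V`, `V(x) = x ^ (p + 1) / (p + 1) - x ^ 2 / 2`, with variable mass `1 - ρ ^ 2`.
The energy `(1 - ρ ^ 2) q ^ 2 / 2 + α (1 - α) V(v)` has derivative `-(1 - 2 α) q ^ 2 / ρ`, so it
decreases. At `ρ₁` it is less than `α ^ 2 / 2 + α (1 - α) V(1)`, which is at most
`α (1 - α) V(1 - 2 α)`; hence `v` never descends to the level `1 - 2 α`.
-/

/-- The ratio `v = u / u∞ = w + 1` of a profile to the singular static solution. -/
noncomputable def uRatio (p : ℕ) (u : ℝ → ℝ) (ρ : ℝ) : ℝ := u ρ / uInfty p ρ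

/-- The slope `q = ρ v'(ρ)` of `v = u / u∞` in the variable `log ρ`, written out in terms of `u` so
that it can be differentiated once more. -/
noncomputable def uRatioSlope (p : ℕ) (u : ℝ → ℝ) (ρ : ℝ) : ℝ :=
  (ρ * deriv u ρ + alphaP p * u ρ) / uInfty p ρ

/-- The potential `V(x) = x ^ (p + 1) / (p + 1) - x ^ 2 / 2`, a primitive of the nonlinearity
`x ^ p - x` in the equation for `u / u∞`. -/
noncomputable def potential (p : ℕ) (x : ℝ) : ℝ := x ^ (p + 1) / ((p : ℝ) + 1) - x ^ 2 / 2

/-- The energy of a particle with position `v`, velocity `q` and mass `1 - ρ ^ 2` in the potential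
`k V`. The velocity is an independent argument; it stands for `ρ v'(ρ)`. -/
noncomputable def energy (p : ℕ) (k : ℝ) (v q : ℝ → ℝ) (ρ : ℝ) : ℝ :=
  (1 - ρ ^ 2) * q ρ ^ 2 / 2 + k * potential p (v ρ)

section Energy

variable {p : ℕ} {k x : ℝ} {v q : ℝ → ℝ}

lemma hasDerivAt_potential (p : ℕ) (x : ℝ) : HasDerivAt (potential p) (x ^ p - x) x := by
  have hp : (p : ℝ) + 1 ≠ 0 := by positivity
  refine (((hasDerivAt_pow (p + 1) x).div_const _).sub
    ((hasDerivAt_pow 2 x).div_const 2)).congr_deriv ?_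
  push_cast [Nat.add_sub_cancel]
  field_simp

lemma hasDerivAt_energy {c q' : ℝ} (hx : x ≠ 0) (hv : HasDerivAt v (q x / x) x)
    (hq : HasDerivAt q q' x)
    (hode : (1 - x ^ 2) * (x * q') = (x ^ 2 - c) * q x - k * (v x ^ p - v x)) :
    HasDerivAt (energy p k v q) (-(c * q x ^ 2 / x)) x := by
  have hmass : HasDerivAt (fun ρ : ℝ => 1 - ρ ^ 2) (-(2 * x)) x := by
    simpa using (hasDerivAt_pow 2 x).const_sub 1
  refine (((hmass.fun_mul (hq.fun_pow 2)).div_const 2).add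
    (((hasDerivAt_potential p (v x)).comp x hv).const_mul k)).congr_deriv ?_
  push_cast
  field_simp
  linear_combination q x * hode

lemma energy_lt_of_abs_le {a : ℝ} (hx : x ≠ 0) (hx1 : |x| ≤ 1) (ha : 0 < a) (hq : |q x| ≤ a) :
    energy p k v q x < a ^ 2 / 2 + k * potential p (v x) := by
  have hsq : q x ^ 2 ≤ a ^ 2 := sq_le_sq.2 (hq.trans (le_abs_self a))
  have hmass : (1 - x ^ 2) * q x ^ 2 < a ^ 2 := calc
    (1 - x ^ 2) * q x ^ 2 ≤ (1 - x ^ 2) * a ^ 2 :=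
      mul_le_mul_of_nonneg_left hsq (sub_nonneg.2 ((sq_le_one_iff_abs_le_one x).2 hx1))
    _ < 1 * a ^ 2 := by gcongr; exact sub_lt_self 1 (by positivity)
    _ = a ^ 2 := one_mul _
  unfold energy
  linarith

lemma mul_potential_le_energy (hx : |x| ≤ 1) : k * potential p (v x) ≤ energy p k v q x := by
  have hmass : 0 ≤ 1 - x ^ 2 := sub_nonneg.2 ((sq_le_one_iff_abs_le_one x).2 hx)
  exact le_add_of_nonneg_left (by positivity)

end Energy

section Parameters

variable {p : ℕ}

lemma alphaP_pos (hp : 1 < p) : 0 < alphaP p :=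
  div_pos two_pos (sub_pos.2 (by exact_mod_cast hp))

lemma alphaP_mul_sub_one (hp : p ≠ 1) : alphaP p * ((p : ℝ) - 1) = 2 :=
  div_mul_cancel₀ _ (sub_ne_zero.2 (by exact_mod_cast hp))

lemma alphaP_le_two_fifths (hp : 6 ≤ p) : alphaP p ≤ 2 / 5 := by
  have hp' : (6 : ℝ) ≤ p := by exact_mod_cast hp
  exact div_le_div_of_nonneg_left two_pos.le (by norm_num) (by linarith)

lemma potential_one (hp : 1 < p) : potential p 1 = -(1 / (2 * (1 + alphaP p))) := by
  have hα := alphaP_pos hp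
  have hmul := alphaP_mul_sub_one hp.ne'
  rw [potential, one_pow, one_pow]
  field_simp
  linear_combination -hmul

lemma one_le_two_mul_sq_one_sub_mul {a : ℝ} (ha0 : 0 ≤ a) (ha : a ≤ 2 / 5) :
    1 ≤ 2 * (1 - a) ^ 2 * (1 + a) := by
  nlinarith [mul_nonneg ha0 (sub_nonneg.2 ha), mul_nonneg ha0 (sq_nonneg a)]

lemma half_sq_alphaP_add_potential_one_le (hp : 6 ≤ p) :
    alphaP p ^ 2 / 2 + alphaP p * (1 - alphaP p) * potential p 1 ≤
      alphaP p * (1 - alphaP p) * potential p (1 - 2 * alphaP p) := by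
  have hα := alphaP_pos (p := p) (by lia)
  have hα' := alphaP_le_two_fifths hp
  have hcubic := one_le_two_mul_sq_one_sub_mul hα.le hα'
  have hdrop : -((1 - 2 * alphaP p) ^ 2 / 2) ≤ potential p (1 - 2 * alphaP p) := by
    have hbase : 0 ≤ 1 - 2 * alphaP p := by linarith
    have hpow : 0 ≤ (1 - 2 * alphaP p) ^ (p + 1) / ((p : ℝ) + 1) := by positivity
    unfold potential
    linarith
  have hk : 0 ≤ alphaP p * (1 - alphaP p) := mul_nonneg hα.le (by linarith)
  refine le_trans ?_ (mul_le_mul_of_nonneg_left hdrop hk)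
  rw [potential_one (by lia)]
  generalize alphaP p = a at *
  have hgap : a * (1 - a) * -((1 - 2 * a) ^ 2 / 2) -
      (a ^ 2 / 2 + a * (1 - a) * -(1 / (2 * (1 + a)))) =
      a ^ 2 * (2 * (1 - a) ^ 2 * (1 + a) - 1) / (1 + a) := by
    field_simp
    ring
  have hgap_nonneg : 0 ≤ a ^ 2 * (2 * (1 - a) ^ 2 * (1 + a) - 1) / (1 + a) :=
    div_nonneg (mul_nonneg (sq_nonneg a) (sub_nonneg.2 hcubic)) (by linarith)
  linarith

end Parameters

section SingularSolution

variable {p : ℕ} {x : ℝ}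

lemma uInfty_pos (hp : 3 < p) (hx : 0 < x) : 0 < uInfty p x := by
  have hp' : (3 : ℝ) < p := by exact_mod_cast hp
  have hbase : 0 < 2 * ((p : ℝ) - 3) / ((p : ℝ) - 1) ^ 2 :=
    div_pos (by linarith) (pow_pos (by linarith) 2)
  exact mul_pos (rpow_pos_of_pos hbase _) (rpow_pos_of_pos hx _)

lemma bInfty_pow_sub_one (hp : 3 ≤ p) : bInfty p ^ (p - 1) = alphaP p * (1 - alphaP p) := by
  have hp' : (3 : ℝ) ≤ p := by exact_mod_cast hp
  have hp1 : (0 : ℝ) < (p : ℝ) - 1 := by linarith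
  have hbase : 0 ≤ 2 * ((p : ℝ) - 3) / ((p : ℝ) - 1) ^ 2 :=
    div_nonneg (by linarith) (sq_nonneg _)
  rw [bInfty, ← rpow_natCast, ← rpow_mul hbase, Nat.cast_pred (by lia),
    one_div_mul_cancel hp1.ne', rpow_one, alphaP]
  field_simp
  ring

lemma rpow_neg_alphaP_pow_sub_one (hp : 1 < p) (hx : 0 ≤ x) :
    (x ^ (-alphaP p)) ^ (p - 1) = (x ^ 2)⁻¹ := by
  rw [← rpow_natCast, ← rpow_mul hx, Nat.cast_pred (by lia), neg_mul,
    alphaP_mul_sub_one hp.ne', rpow_neg hx, rpow_two]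

lemma sq_mul_uInfty_pow (hp : 3 ≤ p) (hx : 0 < x) :
    x ^ 2 * uInfty p x ^ p = alphaP p * (1 - alphaP p) * uInfty p x := by
  have hpow : uInfty p x ^ (p - 1) = alphaP p * (1 - alphaP p) * (x ^ 2)⁻¹ := by
    rw [uInfty, mul_pow, bInfty_pow_sub_one hp, rpow_neg_alphaP_pow_sub_one (by lia) hx.le]
  rw [← pow_sub_one_mul (by lia : p ≠ 0), hpow]
  field_simp

lemma hasDerivAt_uInfty (p : ℕ) (hx : x ≠ 0) :
    HasDerivAt (uInfty p) (-(alphaP p * uInfty p x / x)) x := by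
  refine ((hasDerivAt_rpow_const (p := -alphaP p) (Or.inl hx)).const_mul
    (bInfty p)).congr_deriv ?_
  rw [rpow_sub_one hx, uInfty]
  ring

lemma hasDerivAt_div_uInfty {f : ℝ → ℝ} {f' : ℝ} (hp : 3 < p) (hx : 0 < x)
    (hf : HasDerivAt f f' x) :
    HasDerivAt (fun ρ => f ρ / uInfty p ρ) ((x * f' + alphaP p * f x) / uInfty p x / x) x := by
  have hU := (uInfty_pos hp hx).ne'
  refine (hf.fun_div (hasDerivAt_uInfty p hx.ne') hU).congr_deriv ?_
  field_simp
  ring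

end SingularSolution

section Profile

variable {p : ℕ} {u : ℝ → ℝ} {x : ℝ}

lemma hasDerivAt_uRatio (hp : 3 < p) (hx : 0 < x) (hu : DifferentiableAt ℝ u x) :
    HasDerivAt (uRatio p u) (uRatioSlope p u x / x) x :=
  hasDerivAt_div_uInfty hp hx hu.hasDerivAt

lemma mul_deriv_uRatio_sub_one (hp : 3 < p) (hx : 0 < x) (hu : DifferentiableAt ℝ u x) :
    x * deriv (fun ρ => uRatio p u ρ - 1) x = uRatioSlope p u x := by
  rw [((hasDerivAt_uRatio hp hx hu).sub_const 1).deriv, mul_div_cancel₀ _ hx.ne']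

lemma hasDerivAt_uRatioSlope (hp : 3 < p) (hx : 0 < x) (hu : DifferentiableAt ℝ u x)
    (hu' : DifferentiableAt ℝ (deriv u) x) :
    HasDerivAt (uRatioSlope p u) ((x ^ 2 * deriv (deriv u) x + (1 + 2 * alphaP p) * x * deriv u x +
      alphaP p ^ 2 * u x) / uInfty p x / x) x := by
  have hnum : HasDerivAt (fun ρ => ρ * deriv u ρ + alphaP p * u ρ)
      (1 * deriv u x + x * deriv (deriv u) x + alphaP p * deriv u x) x :=
    ((hasDerivAt_id' x).mul hu'.hasDerivAt).add (hu.hasDerivAt.const_mul _)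
  refine (hasDerivAt_div_uInfty hp hx hnum).congr_deriv ?_
  ring

lemma mul_uRatio_pow (hp : 3 < p) (hx : 0 < x) :
    alphaP p * (1 - alphaP p) * uRatio p u x ^ p = x ^ 2 * u x ^ p / uInfty p x := by
  have hU := (uInfty_pos hp hx).ne'
  rw [uRatio, div_pow]
  field_simp
  linear_combination -(u x ^ p) * sq_mul_uInfty_pow hp.le hx

lemma uRatioSlope_ode (hp : 3 < p) (hx : 0 < x) (hu : DifferentiableAt ℝ u x)
    (hu' : DifferentiableAt ℝ (deriv u) x) (heq : ProfileEq p u x) :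
    (1 - x ^ 2) * (x * deriv (uRatioSlope p u) x) =
      (x ^ 2 - (1 - 2 * alphaP p)) * uRatioSlope p u x -
        alphaP p * (1 - alphaP p) * (uRatio p u x ^ p - uRatio p u x) := by
  have hU := (uInfty_pos hp hx).ne'
  rw [mul_sub, mul_uRatio_pow hp hx, (hasDerivAt_uRatioSlope hp hx hu hu').deriv, uRatioSlope,
    uRatio]
  unfold ProfileEq at heq
  field_simp at heq ⊢
  linear_combination x * heq

lemma hasDerivAt_energy_uRatio (hp : 3 < p) (hx : 0 < x) (hu : DifferentiableAt ℝ u x)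
    (hu' : DifferentiableAt ℝ (deriv u) x) (heq : ProfileEq p u x) :
    HasDerivAt (energy p (alphaP p * (1 - alphaP p)) (uRatio p u) (uRatioSlope p u))
      (-((1 - 2 * alphaP p) * uRatioSlope p u x ^ 2 / x)) x :=
  hasDerivAt_energy hx.ne' (hasDerivAt_uRatio hp hx hu)
    (hasDerivAt_uRatioSlope hp hx hu hu').differentiableAt.hasDerivAt
    (uRatioSlope_ode hp hx hu hu' heq)

lemma antitoneOn_energy_uRatio {s : Set ℝ} (hp : 5 ≤ p) (hs : Convex ℝ s) (hpos : ∀ ρ ∈ s, 0 < ρ)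
    (hu : ∀ ρ ∈ s, DifferentiableAt ℝ u ρ) (hu' : ∀ ρ ∈ s, DifferentiableAt ℝ (deriv u) ρ)
    (heq : ∀ ρ ∈ s, ProfileEq p u ρ) :
    AntitoneOn (energy p (alphaP p * (1 - alphaP p)) (uRatio p u) (uRatioSlope p u)) s := by
  have hderiv (ρ : ℝ) (hρ : ρ ∈ s) :=
    hasDerivAt_energy_uRatio (by lia) (hpos ρ hρ) (hu ρ hρ) (hu' ρ hρ) (heq ρ hρ)
  have hdamping : 0 ≤ 1 - 2 * alphaP p := by
    have hp' : (5 : ℝ) ≤ p := by exact_mod_cast hp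
    nlinarith [alphaP_mul_sub_one (p := p) (by lia), alphaP_pos (p := p) (by lia)]
  refine antitoneOn_of_hasDerivWithinAt_nonpos hs
    (fun ρ hρ => (hderiv ρ hρ).continuousAt.continuousWithinAt)
    (fun ρ hρ => (hderiv ρ (interior_subset hρ)).hasDerivWithinAt) fun ρ hρ => ?_
  have hρ_pos := hpos ρ (interior_subset hρ)
  exact neg_nonpos.2 (by positivity)

lemma uRatio_ne_one_sub_two_mul_alphaP {ρ₁ r : ℝ} (hp : 6 ≤ p) (hρ₁ : 0 < ρ₁)
    (hr : r ∈ Ico ρ₁ 1)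
    (hu : ∀ ρ ∈ Ico ρ₁ 1, DifferentiableAt ℝ u ρ)
    (hu' : ∀ ρ ∈ Ico ρ₁ 1, DifferentiableAt ℝ (deriv u) ρ)
    (heq : ∀ ρ ∈ Ico ρ₁ 1, ProfileEq p u ρ)
    (hone : uRatio p u ρ₁ = 1) (hslope : |uRatioSlope p u ρ₁| ≤ alphaP p) :
    uRatio p u r ≠ 1 - 2 * alphaP p := by
  intro hlevel
  have hr_abs : |r| ≤ 1 := abs_le.2 ⟨by linarith [hr.1], hr.2.le⟩
  have hρ₁_one : ρ₁ < 1 := hr.1.trans_lt hr.2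
  set k := alphaP p * (1 - alphaP p)
  set E := energy p k (uRatio p u) (uRatioSlope p u)
  have hlt : E r < E r := calc
    E r ≤ E ρ₁ := antitoneOn_energy_uRatio (by lia) (convex_Ico ρ₁ 1)
      (fun ρ hρ => hρ₁.trans_le hρ.1) hu hu' heq (left_mem_Ico.2 hρ₁_one) hr hr.1
    _ < alphaP p ^ 2 / 2 + k * potential p (uRatio p u ρ₁) :=
      energy_lt_of_abs_le hρ₁.ne' (abs_le.2 ⟨by linarith, hρ₁_one.le⟩) (alphaP_pos (by lia)) hslope
    _ ≤ k * potential p (uRatio p u r) := by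
      rw [hone, hlevel]
      exact half_sq_alphaP_add_potential_one_le hp
    _ ≤ E r := mul_potential_le_energy hr_abs
  exact hlt.false

end Profile

theorem w_lower_bound_general (p : ℕ) (hp : 6 ≤ p) (u : ℝ → ℝ) (ρ₁ : ℝ) (hρ₁ : 0 < ρ₁)
    (hdiff : ∀ ρ ∈ Ico ρ₁ 1, DifferentiableAt ℝ u ρ)
    (hdiff2 : ∀ ρ ∈ Ico ρ₁ 1, DifferentiableAt ℝ (deriv u) ρ)
    (heq : ∀ ρ ∈ Ico ρ₁ 1, ProfileEq p u ρ)
    (hw0 : u ρ₁ / uInfty p ρ₁ - 1 = 0)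
    (hwd : |ρ₁ * deriv (fun ρ => u ρ / uInfty p ρ - 1) ρ₁| ≤ alphaP p) :
    ∀ ρ ∈ Ioo ρ₁ 1, -2 * alphaP p < u ρ / uInfty p ρ - 1 := by
  intro ρ hρ
  have hone : uRatio p u ρ₁ = 1 := sub_eq_zero.1 hw0
  have hslope : |uRatioSlope p u ρ₁| ≤ alphaP p := by
    rwa [← mul_deriv_uRatio_sub_one (by lia) hρ₁ (hdiff ρ₁ ⟨le_rfl, hρ.1.trans hρ.2⟩)]
  have hcont : ContinuousOn (uRatio p u) (Icc ρ₁ ρ) := fun r hr =>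
    (hasDerivAt_uRatio (by lia) (hρ₁.trans_le hr.1)
      (hdiff r ⟨hr.1, hr.2.trans_lt hρ.2⟩)).continuousAt.continuousWithinAt
  by_contra! hlow
  have hlevel : 1 - 2 * alphaP p ∈ Icc (uRatio p u ρ) (uRatio p u ρ₁) :=
    ⟨by unfold uRatio; linarith, by linarith [alphaP_pos (p := p) (by lia)]⟩
  obtain ⟨r, hr, hvr⟩ := intermediate_value_Icc' hρ.1.le hcont hlevel
  exact uRatio_ne_one_sub_two_mul_alphaP hp hρ₁ ⟨hr.1, hr.2.trans_lt hρ.2⟩ hdiff hdiff2 heq hone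
    hslope hvr

/-- **Corollary to Lemma 1.** If `w = u/u∞ - 1` vanishes at some
`ρ₁ ∈ (0,1)` with `0 ≤ ρ₁ w'(ρ₁) ≤ α`, then `w > -2α` on `(ρ₁, 1)`. -/
theorem w_lower_bound (p : ℕ) (hp_odd : Odd p) (hp : 7 ≤ p)
    (u : ℝ → ℝ)
    (hdiff : ∀ ρ ∈ Ioo (0 : ℝ) 1, DifferentiableAt ℝ u ρ)
    (hdiff2 : ∀ ρ ∈ Ioo (0 : ℝ) 1, DifferentiableAt ℝ (deriv u) ρ)
    (heq : ∀ ρ ∈ Ioo (0 : ℝ) 1, ProfileEq p u ρ)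
    (ρ₁ : ℝ) (hρ₁ : ρ₁ ∈ Ioo (0 : ℝ) 1)
    (hw0 : (fun ρ => u ρ / uInfty p ρ - 1) ρ₁ = 0)
    (hwd0 : 0 ≤ ρ₁ * deriv (fun ρ => u ρ / uInfty p ρ - 1) ρ₁)
    (hwd1 : ρ₁ * deriv (fun ρ => u ρ / uInfty p ρ - 1) ρ₁ ≤ alphaP p) :
    ∀ ρ ∈ Ioo ρ₁ 1, -2 * alphaP p < u ρ / uInfty p ρ - 1 := by
  have hsub : Ico ρ₁ 1 ⊆ Ioo 0 1 := Ico_subset_Ioo_left hρ₁.1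
  exact w_lower_bound_general p (by lia) u ρ₁ hρ₁.1 (fun ρ hρ => hdiff ρ (hsub hρ))
    (fun ρ hρ => hdiff2 ρ (hsub hρ)) (fun ρ hρ => heq ρ (hsub hρ)) hw0
    (abs_le.2 ⟨by linarith, hwd1⟩)
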